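/- Under Assumption 1, let i ∈ [m], let A(i) be the causal Markov boundary of X_i, and let B, W ⊆ [m]∖{i} with A(i) ⊆ B. Then: (i) the causal Markov chain X_W → X_B → X_i holds, i.e. I(X_W → X_i ‖ X_B) = 0; (ii) I(X_W → X_i) ≤ I(X_B → X_i); and (iii) equality holds in (ii) if and only if A(i) ⊆ W. -/

import Mathlib

open Finset

/-- Probability of an event under the probability mass function `p` on a finite space. -/
noncomputable def pr {Ω : Type} [Fintype Ω] (p : Ω → ℝ) (E : Set Ω) : ℝ :=
  ∑ ω : Ω, E.indicator p ω

/-- Shannon conditional mutual information `I(A ; B | C)` of finite-valued random variables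
on a finite probability space with pmf `p` (terms with vanishing probability contribute `0`,
by the conventions `Real.log 0 = 0`, `x / 0 = 0`). -/
noncomputable def cmi {Ω α β γ : Type} [Fintype Ω] [Fintype α] [Fintype β] [Fintype γ]
    (p : Ω → ℝ) (A : Ω → α) (B : Ω → β) (C : Ω → γ) : ℝ :=
  ∑ a : α, ∑ b : β, ∑ c : γ,
    pr p {ω | A ω = a ∧ B ω = b ∧ C ω = c} *
      Real.log (pr p {ω | A ω = a ∧ B ω = b ∧ C ω = c} * pr p {ω | C ω = c} /
        (pr p {ω | A ω = a ∧ C ω = c} * pr p {ω | B ω = b ∧ C ω = c}))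

/-- `A` and `B` are conditionally independent given `C` (under the pmf `p`). -/
def CondIndep {Ω α β γ : Type} [Fintype Ω] (p : Ω → ℝ)
    (A : Ω → α) (B : Ω → β) (C : Ω → γ) : Prop :=
  ∀ (a : α) (b : β) (c : γ),
    pr p {ω | A ω = a ∧ B ω = b ∧ C ω = c} * pr p {ω | C ω = c}
      = pr p {ω | A ω = a ∧ C ω = c} * pr p {ω | B ω = b ∧ C ω = c}

/-- Trajectories of `m` processes over `n` time steps with alphabet `𝒳`:
`ω i j` is the value of process `i` at (0-indexed) time `j`. -/
abbrev Traj (m n : ℕ) (𝒳 : Type) := Fin m → Fin n → 𝒳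

/-- The past `X_S^{j-1}`: the values of the processes in `S` at times strictly before `j`;
all other entries are masked by `none`. -/
def past {m n : ℕ} {𝒳 : Type} (S : Finset (Fin m)) (j : Fin n) (ω : Traj m n 𝒳) :
    Fin m → Fin n → Option 𝒳 :=
  fun k t => if k ∈ S ∧ t < j then some (ω k t) else none

/-- Causally conditioned directed information
`I(X_S → X_i ‖ X_T) := Σ_{j=1}^{n} I(X_S^{j-1} ; X_{i,j} | X_i^{j-1}, X_T^{j-1})`. -/
noncomputable def di {m n : ℕ} {𝒳 : Type} [Fintype 𝒳] [DecidableEq 𝒳]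
    (p : Traj m n 𝒳 → ℝ) (S : Finset (Fin m)) (i : Fin m) (T : Finset (Fin m)) : ℝ :=
  ∑ j : Fin n,
    cmi p (past S j) (fun ω => ω i j) (fun ω => (past {i} j ω, past T j ω))

/-- Assumption 1: the joint distribution is strictly positive (and is a pmf), and at each
time `j` the variables `X_{1,j}, …, X_{m,j}` are mutually conditionally independent given
the full past `X_{[m]}^{j-1}` (stated in the division-free form
`P(joint ∧ past) · P(past)^{m-1} = Π_i P(X_{i,j} = x_i ∧ past)`). -/
def Assumption1 {m n : ℕ} {𝒳 : Type} [Fintype 𝒳] [DecidableEq 𝒳]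
    (p : Traj m n 𝒳 → ℝ) : Prop :=
  (∀ ω, 0 < p ω) ∧ (∑ ω : Traj m n 𝒳, p ω = 1) ∧
    ∀ (j : Fin n) (x : Fin m → 𝒳) (h : Fin m → Fin n → Option 𝒳),
      pr p {ω | (∀ i, ω i j = x i) ∧ past Finset.univ j ω = h} *
          pr p {ω | past Finset.univ j ω = h} ^ (m - 1)
        = ∏ i : Fin m, pr p {ω | ω i j = x i ∧ past Finset.univ j ω = h}

/-- `S ⊆ [m]∖{i}` is a causal Markov blanket of `X_i` if
`I(X_{[m]∖({i}∪S)} → X_i ‖ X_S) = 0`. -/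
def IsCausalBlanket {m n : ℕ} {𝒳 : Type} [Fintype 𝒳] [DecidableEq 𝒳]
    (p : Traj m n 𝒳 → ℝ) (i : Fin m) (S : Finset (Fin m)) : Prop :=
  S ⊆ Finset.univ.erase i ∧ di p (Finset.univ.erase i \ S) i S = 0

/-- A causal Markov boundary `A(i)` of `X_i` is a causal Markov blanket of minimum
cardinality. -/
def IsCausalBoundary {m n : ℕ} {𝒳 : Type} [Fintype 𝒳] [DecidableEq 𝒳]
    (p : Traj m n 𝒳 → ℝ) (i : Fin m) (A : Finset (Fin m)) : Prop :=
  IsCausalBlanket p i A ∧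
    ∀ B : Finset (Fin m), IsCausalBlanket p i B → A.card ≤ B.card

section FiniteProbability

variable {Ω α β γ : Type} [Fintype Ω] [Fintype α] [Fintype β] [Fintype γ]
  {p : Ω → ℝ}

lemma pr_nonneg (hp : ∀ ω, 0 < p ω) (E : Set Ω) : 0 ≤ pr p E :=
  Finset.sum_nonneg fun ω _ => Set.indicator_nonneg (fun x _ => (hp x).le) ω

lemma pr_pos (hp : ∀ ω, 0 < p ω) {E : Set Ω} {ω : Ω} (hω : ω ∈ E) : 0 < pr p E := by
  refine Finset.sum_pos' (fun ω _ => Set.indicator_nonneg (fun x _ => (hp x).le) ω)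
    ⟨ω, Finset.mem_univ _, ?_⟩
  rw [Set.indicator_of_mem hω]
  exact hp ω

/-- Law of the unconscious statistician. -/
lemma sum_pr_mul (A : Ω → α) (f : α → ℝ) :
    ∑ a, pr p {ω | A ω = a} * f a = ∑ ω, p ω * f (A ω) := by
  classical
  simp only [pr, Finset.sum_mul]
  rw [Finset.sum_comm]
  refine Finset.sum_congr rfl fun ω _ => ?_
  simp [Set.indicator_apply]

lemma sum_pr_and (A : Ω → α) (E : Set Ω) :
    ∑ a, pr p {ω | A ω = a ∧ ω ∈ E} = pr p E := by
  classical
  simp only [pr]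
  rw [Finset.sum_comm]
  refine Finset.sum_congr rfl fun ω _ => ?_
  by_cases h : ω ∈ E <;> simp [Set.indicator_apply, h]

/-- Expectation of a function of a triple of random variables. -/
lemma sum_pr_mul_triple (A : Ω → α) (B : Ω → β) (C : Ω → γ) (f : α → β → γ → ℝ) :
    ∑ a, ∑ b, ∑ c, pr p {ω | A ω = a ∧ B ω = b ∧ C ω = c} * f a b c
      = ∑ ω, p ω * f (A ω) (B ω) (C ω) := by
  rw [← sum_pr_mul (fun ω => (A ω, B ω, C ω)) (fun x => f x.1 x.2.1 x.2.2)]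
  simp only [Fintype.sum_prod_type, Prod.mk.injEq]

/-- The expected likelihood ratio of the conditional product law to the joint law is at most
the total mass. -/
lemma sum_mul_ratio_le (hp : ∀ ω, 0 < p ω) (A : Ω → α) (B : Ω → β) (C : Ω → γ) :
    ∑ ω, p ω * (pr p {ω' | A ω' = A ω ∧ C ω' = C ω} * pr p {ω' | B ω' = B ω ∧ C ω' = C ω} /
      (pr p {ω' | A ω' = A ω ∧ B ω' = B ω ∧ C ω' = C ω} * pr p {ω' | C ω' = C ω}))
      ≤ ∑ ω, p ω := by
  rw [← sum_pr_mul_triple A B C (fun a b c =>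
    pr p {ω' | A ω' = a ∧ C ω' = c} * pr p {ω' | B ω' = b ∧ C ω' = c} /
      (pr p {ω' | A ω' = a ∧ B ω' = b ∧ C ω' = c} * pr p {ω' | C ω' = c}))]
  calc _ ≤ ∑ a, ∑ b, ∑ c, pr p {ω' | A ω' = a ∧ C ω' = c} *
        pr p {ω' | B ω' = b ∧ C ω' = c} / pr p {ω' | C ω' = c} := by
        gcongr with a _ b _ c _
        rcases (pr_nonneg hp {ω' | A ω' = a ∧ B ω' = b ∧ C ω' = c}).eq_or_lt with h | h
        · rw [← h, zero_mul]
          exact div_nonneg (mul_nonneg (pr_nonneg hp _) (pr_nonneg hp _)) (pr_nonneg hp _)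
        · rw [← mul_div_assoc, mul_div_mul_left _ _ h.ne']
    _ = ∑ c, (∑ a, pr p {ω' | A ω' = a ∧ C ω' = c}) *
        (∑ b, pr p {ω' | B ω' = b ∧ C ω' = c}) / pr p {ω' | C ω' = c} := by
        simp only [Finset.sum_mul_sum, Finset.sum_div]
        rw [Finset.sum_comm (s := (Finset.univ : Finset γ))]
        exact Finset.sum_congr rfl fun a _ => Finset.sum_comm
    _ = ∑ c, pr p {ω' | C ω' = c} * 1 := by
        refine Finset.sum_congr rfl fun c _ => ?_
        have hA := sum_pr_and (p := p) A {ω' | C ω' = c}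
        have hB := sum_pr_and (p := p) B {ω' | C ω' = c}
        simp only [Set.mem_ofPred_eq] at hA hB
        rw [hA, hB, mul_one, mul_self_div_self]
    _ = ∑ ω, p ω := by rw [sum_pr_mul C (fun _ => 1)]; simp

/-- Conditional mutual information as an expected log-likelihood ratio. -/
lemma cmi_eq_sum (p : Ω → ℝ) (A : Ω → α) (B : Ω → β) (C : Ω → γ) :
    cmi p A B C = ∑ ω, p ω * Real.log
      (pr p {ω' | A ω' = A ω ∧ B ω' = B ω ∧ C ω' = C ω} * pr p {ω' | C ω' = C ω} /
        (pr p {ω' | A ω' = A ω ∧ C ω' = C ω} * pr p {ω' | B ω' = B ω ∧ C ω' = C ω})) :=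
  sum_pr_mul_triple A B C _

lemma cmi_nonneg_and_eq_of_eq_zero (hp : ∀ ω, 0 < p ω) (A : Ω → α) (B : Ω → β) (C : Ω → γ) :
    0 ≤ cmi p A B C ∧ (cmi p A B C = 0 → ∀ ω,
      pr p {ω' | A ω' = A ω ∧ B ω' = B ω ∧ C ω' = C ω} * pr p {ω' | C ω' = C ω}
        = pr p {ω' | A ω' = A ω ∧ C ω' = C ω} * pr p {ω' | B ω' = B ω ∧ C ω' = C ω}) := by
  set u : Ω → ℝ := fun ω =>
    pr p {ω' | A ω' = A ω ∧ B ω' = B ω ∧ C ω' = C ω} * pr p {ω' | C ω' = C ω} with hu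
  set v : Ω → ℝ := fun ω =>
    pr p {ω' | A ω' = A ω ∧ C ω' = C ω} * pr p {ω' | B ω' = B ω ∧ C ω' = C ω} with hv
  have hu0 : ∀ ω, 0 < u ω := fun ω =>
    mul_pos (pr_pos hp (ω := ω) ⟨rfl, rfl, rfl⟩) (pr_pos hp (ω := ω) rfl)
  have hv0 : ∀ ω, 0 < v ω := fun ω =>
    mul_pos (pr_pos hp (ω := ω) ⟨rfl, rfl⟩) (pr_pos hp (ω := ω) ⟨rfl, rfl⟩)
  have hcmi : cmi p A B C = -∑ ω, p ω * Real.log (v ω / u ω) := by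
    rw [cmi_eq_sum, ← Finset.sum_neg_distrib]
    refine Finset.sum_congr rfl fun ω _ => ?_
    rw [← mul_neg, ← Real.log_inv, inv_div]
  have hratio : ∑ ω, p ω * (v ω / u ω) ≤ ∑ ω, p ω := sum_mul_ratio_le hp A B C
  have hterm : ∀ ω, 0 ≤ p ω * (v ω / u ω - 1 - Real.log (v ω / u ω)) := fun ω =>
    mul_nonneg (hp ω).le (by
      linarith [Real.log_le_sub_one_of_pos (div_pos (hv0 ω) (hu0 ω))])
  have hsum : ∑ ω, p ω * (v ω / u ω - 1 - Real.log (v ω / u ω)) ≤ cmi p A B C := by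
    simp only [mul_sub, Finset.sum_sub_distrib, mul_one]
    linarith
  refine ⟨(Finset.sum_nonneg fun ω _ => hterm ω).trans hsum, fun h0 ω => ?_⟩
  rw [h0] at hsum
  have hzero := (Finset.sum_eq_zero_iff_of_nonneg fun ω _ => hterm ω).1
    (hsum.antisymm (Finset.sum_nonneg fun ω _ => hterm ω)) ω (Finset.mem_univ _)
  have hlog := (mul_eq_zero.1 hzero).resolve_left (hp ω).ne'
  have hone : v ω / u ω = 1 := by
    by_contra hne
    linarith [Real.log_lt_sub_one_of_pos (div_pos (hv0 ω) (hu0 ω)) hne]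
  exact ((div_eq_one_iff_eq (hu0 ω).ne').1 hone).symm

/-- Tower property: averaging a conditional probability given `C` over an event determined by
`C`. -/
lemma sum_mul_condProb (hp : ∀ ω, 0 < p ω) (E : Set Ω) (C : Ω → γ) (F : γ → ℝ) :
    ∑ ω, p ω * (F (C ω) * (pr p {ω' | ω' ∈ E ∧ C ω' = C ω} / pr p {ω' | C ω' = C ω}))
      = ∑ ω, E.indicator p ω * F (C ω) := by
  classical
  rw [← sum_pr_mul C (fun c => F c * (pr p {ω' | ω' ∈ E ∧ C ω' = c} / pr p {ω' | C ω' = c})),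
    ← sum_pr_mul C F]
  refine Finset.sum_congr rfl fun c _ => ?_
  have hpr : pr (E.indicator p) {ω | C ω = c} = pr p {ω' | ω' ∈ E ∧ C ω' = c} := by
    refine Finset.sum_congr rfl fun ω _ => ?_
    simp only [Set.indicator_apply, Set.mem_ofPred_eq]
    split_ifs <;> tauto
  rw [hpr]
  rcases (pr_nonneg hp {ω' | C ω' = c}).eq_or_lt with h | h
  · have hle : pr p {ω' | ω' ∈ E ∧ C ω' = c} ≤ pr p {ω' | C ω' = c} :=
      Finset.sum_le_sum fun ω _ => Set.indicator_le_indicator_of_subset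
        (fun _ hx => hx.2) (fun x => (hp x).le) ω
    rw [(hle.trans_eq h.symm).antisymm (pr_nonneg hp _), ← h]
    simp
  · field_simp

end FiniteProbability

section Processes

variable {m n : ℕ} {𝒳 : Type}

lemma past_eq_iff {S : Finset (Fin m)} {j : Fin n} {ω ω' : Traj m n 𝒳} :
    past S j ω' = past S j ω ↔ ∀ k ∈ S, ∀ t < j, ω' k t = ω k t := by
  constructor
  · intro h k hk t ht
    have := congrFun (congrFun h k) t
    simpa [past, hk, ht] using this
  · intro h
    funext k t
    by_cases hkt : k ∈ S ∧ t < j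
    · simp [past, hkt, h k hkt.1 t hkt.2]
    · simp [past, hkt]

lemma past_union_eq_iff {S T : Finset (Fin m)} {j : Fin n} {ω ω' : Traj m n 𝒳} :
    past (S ∪ T) j ω' = past (S ∪ T) j ω ↔
      past S j ω' = past S j ω ∧ past T j ω' = past T j ω := by
  simp only [past_eq_iff, Finset.mem_union, or_imp, forall_and]

lemma past_pair_eq_iff {i : Fin m} {T : Finset (Fin m)} {j : Fin n} {ω ω' : Traj m n 𝒳} :
    (past {i} j ω', past T j ω') = (past {i} j ω, past T j ω) ↔
      past ({i} ∪ T) j ω' = past ({i} ∪ T) j ω := by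
  rw [Prod.mk.injEq, past_union_eq_iff]

lemma past_and_past_union_eq_iff {i : Fin m} {S T : Finset (Fin m)} {j : Fin n}
    {ω ω' : Traj m n 𝒳} :
    (past S j ω' = past S j ω ∧ past ({i} ∪ T) j ω' = past ({i} ∪ T) j ω) ↔
      past ({i} ∪ (S ∪ T)) j ω' = past ({i} ∪ (S ∪ T)) j ω := by
  simp only [past_union_eq_iff]
  tauto

variable [Fintype 𝒳]

lemma pr_past_pos {p : Traj m n 𝒳 → ℝ} (hp : ∀ ω, 0 < p ω) (S : Finset (Fin m)) (j : Fin n)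
    (ω : Traj m n 𝒳) : 0 < pr p {ω' | past S j ω' = past S j ω} :=
  pr_pos hp (ω := ω) (Set.mem_ofPred.2 rfl)

/-- Conditional probability that `X_{i,j} = y` given that the pasts of `X_i` and `X_S` before
time `j` are those of `ω`. -/
noncomputable def condProb (p : Traj m n 𝒳 → ℝ) (i : Fin m) (j : Fin n) (S : Finset (Fin m))
    (y : 𝒳) (ω : Traj m n 𝒳) : ℝ :=
  pr p {ω' | ω' i j = y ∧ past ({i} ∪ S) j ω' = past ({i} ∪ S) j ω} /
    pr p {ω' | past ({i} ∪ S) j ω' = past ({i} ∪ S) j ω}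

/-- Conditional entropy `H(X_{i,j} | X_i^{j-1}, X_S^{j-1})`. -/
noncomputable def condEnt (p : Traj m n 𝒳 → ℝ) (i : Fin m) (S : Finset (Fin m))
    (j : Fin n) : ℝ :=
  -∑ ω, p ω * Real.log (condProb p i j S (ω i j) ω)

/-- Causally conditioned entropy `H(X_i ‖ X_S)`. -/
noncomputable def causalEnt (p : Traj m n 𝒳 → ℝ) (i : Fin m) (S : Finset (Fin m)) : ℝ :=
  ∑ j, condEnt p i S j

variable {p : Traj m n 𝒳 → ℝ} {i : Fin m} {j : Fin n} {S T : Finset (Fin m)}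

lemma condProb_pos (hp : ∀ ω, 0 < p ω) (ω : Traj m n 𝒳) : 0 < condProb p i j S (ω i j) ω :=
  div_pos (pr_pos hp (ω := ω) ⟨rfl, rfl⟩) (pr_pos hp (ω := ω) rfl)

lemma cmi_past_eq (hp : ∀ ω, 0 < p ω) :
    cmi p (past S j) (fun ω => ω i j) (fun ω => (past {i} j ω, past T j ω))
      = condEnt p i T j - condEnt p i (S ∪ T) j := by
  rw [cmi_eq_sum, condEnt, condEnt, neg_sub_neg, ← Finset.sum_sub_distrib]
  refine Finset.sum_congr rfl fun ω _ => ?_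
  rw [← mul_sub, ← Real.log_div (condProb_pos hp ω).ne' (condProb_pos hp ω).ne']
  simp only [past_pair_eq_iff, and_left_comm (a := past S j _ = _),
    past_and_past_union_eq_iff, condProb]
  rw [div_div_div_eq]

lemma di_eq [DecidableEq 𝒳] (hp : ∀ ω, 0 < p ω) : di p S i T = causalEnt p i T - causalEnt p i (S ∪ T) := by
  simp only [di, cmi_past_eq hp, causalEnt, Finset.sum_sub_distrib]

lemma condEnt_anti (hp : ∀ ω, 0 < p ω) (hST : S ⊆ T) : condEnt p i T j ≤ condEnt p i S j := by
  have h := (cmi_nonneg_and_eq_of_eq_zero hp (past T j) (fun ω => ω i j)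
    (fun ω => (past {i} j ω, past S j ω))).1
  rw [cmi_past_eq hp, Finset.union_eq_left.2 hST] at h
  linarith

lemma causalEnt_anti (hp : ∀ ω, 0 < p ω) (hST : S ⊆ T) : causalEnt p i T ≤ causalEnt p i S :=
  Finset.sum_le_sum fun _ _ => condEnt_anti hp hST

lemma condProb_congr {ω ω' : Traj m n 𝒳} {y : 𝒳}
    (h : past ({i} ∪ S) j ω' = past ({i} ∪ S) j ω) :
    condProb p i j S y ω' = condProb p i j S y ω := by
  simp only [condProb, h]

lemma condProb_eq_of_condEnt_eq (hp : ∀ ω, 0 < p ω) (hST : S ⊆ T)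
    (h : condEnt p i S j = condEnt p i T j) (y : 𝒳) (ω : Traj m n 𝒳) :
    condProb p i j S y ω = condProb p i j T y ω := by
  have hval : ∀ ω : Traj m n 𝒳, condProb p i j S (ω i j) ω = condProb p i j T (ω i j) ω := by
    intro ω
    have hmul := (cmi_nonneg_and_eq_of_eq_zero hp (past T j) (fun ω => ω i j)
      (fun ω => (past {i} j ω, past S j ω))).2
      (by rw [cmi_past_eq hp, Finset.union_eq_left.2 hST, h, sub_self]) ω
    simp only [past_pair_eq_iff, and_left_comm (a := past T j _ = _),
      past_and_past_union_eq_iff, Finset.union_eq_left.2 hST] at hmul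
    rw [condProb, condProb, div_eq_div_iff (pr_past_pos hp _ _ _).ne'
      (pr_past_pos hp _ _ _).ne', hmul, mul_comm]
  set ω₁ : Traj m n 𝒳 := Function.update ω i (Function.update (ω i) j y) with hω₁
  have hy : ω₁ i j = y := by simp [hω₁]
  have hpast : ∀ R : Finset (Fin m), past R j ω₁ = past R j ω := by
    intro R
    refine past_eq_iff.2 fun k _ t ht => ?_
    by_cases hk : k = i
    · subst hk
      simp [hω₁, ht.ne]
    · simp [hω₁, hk]
  rw [← condProb_congr (hpast _), ← condProb_congr (S := T) (hpast _), ← hy]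
  exact hval ω₁

/-- If the conditional law given `X_T` is constant on the cells of the coarser past of `X_S`,
it is also the conditional law given `X_S`. -/
lemma condProb_eq_of_measurable (hp : ∀ ω, 0 < p ω) (hST : S ⊆ T) {y : 𝒳} {ω : Traj m n 𝒳}
    (h : ∀ ω', past ({i} ∪ S) j ω' = past ({i} ∪ S) j ω →
      condProb p i j T y ω' = condProb p i j T y ω) :
    condProb p i j S y ω = condProb p i j T y ω := by
  classical
  have hcell : ∀ ω' : Traj m n 𝒳, past ({i} ∪ S) j ω' = past ({i} ∪ S) j ω ↔
      ∃ ω₁ : Traj m n 𝒳, past ({i} ∪ T) j ω₁ = past ({i} ∪ T) j ω' ∧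
        past ({i} ∪ S) j ω₁ = past ({i} ∪ S) j ω := by
    refine fun ω' => ⟨fun h' => ⟨ω', rfl, h'⟩, ?_⟩
    rintro ⟨ω₁, h₁, h₂⟩
    rw [← h₂, past_eq_iff]
    rw [past_eq_iff] at h₁
    exact fun k hk t ht => (h₁ k (Finset.union_subset_union_right hST hk) t ht).symm
  have htower := sum_mul_condProb hp {ω' | ω' i j = y} (past ({i} ∪ T) j) (fun c =>
    if ∃ ω₁ : Traj m n 𝒳, past ({i} ∪ T) j ω₁ = c ∧
      past ({i} ∪ S) j ω₁ = past ({i} ∪ S) j ω then 1 else 0)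
  simp only [← hcell] at htower
  rw [condProb, div_eq_iff (pr_past_pos hp _ _ _).ne']
  calc _ = ∑ ω', ({ω' | ω' i j = y} : Set (Traj m n 𝒳)).indicator p ω' *
        (if past ({i} ∪ S) j ω' = past ({i} ∪ S) j ω then 1 else 0) := by
        refine Finset.sum_congr rfl fun ω' _ => ?_
        simp only [Set.indicator_apply, Set.mem_ofPred_eq, ite_and, mul_ite, mul_one, mul_zero]
        split_ifs <;> rfl
    _ = _ := by
        rw [← htower, pr, Finset.mul_sum]
        refine Finset.sum_congr rfl fun ω' _ => ?_
        by_cases hω' : past ({i} ∪ S) j ω' = past ({i} ∪ S) j ω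
        · have := h ω' hω'
          rw [condProb] at this
          simp only [Set.indicator_apply, Set.mem_ofPred_eq, hω', if_true, one_mul]
          rw [this, mul_comm]
        · simp only [Set.indicator_apply, Set.mem_ofPred_eq, hω', if_false, zero_mul, mul_zero]

/-- Intersection property of conditional independence under full support. -/
lemma condEnt_inter_eq (hp : ∀ ω, 0 < p ω) {U : Finset (Fin m)} (hSU : S ⊆ U) (hTU : T ⊆ U)
    (hS : condEnt p i S j = condEnt p i U j) (hT : condEnt p i T j = condEnt p i U j) :
    condEnt p i (S ∩ T) j = condEnt p i U j := by
  classical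
  have key : ∀ y ω, condProb p i j (S ∩ T) y ω = condProb p i j U y ω := by
    intro y ω
    refine condProb_eq_of_measurable hp (Finset.inter_subset_left.trans hSU) fun ω' h => ?_
    rw [past_eq_iff] at h
    let ω₁ : Traj m n 𝒳 := fun k => if k ∈ S then ω k else ω' k
    have h₁ : past ({i} ∪ S) j ω₁ = past ({i} ∪ S) j ω := by
      refine past_eq_iff.2 fun k hk t ht => ?_
      by_cases hkS : k ∈ S
      · simp [ω₁, hkS]
      · simp only [ω₁, hkS, if_false]
        exact h k (by simp_all) t ht
    have h₂ : past ({i} ∪ T) j ω₁ = past ({i} ∪ T) j ω' := by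
      refine past_eq_iff.2 fun k hk t ht => ?_
      by_cases hkS : k ∈ S
      · simp only [ω₁, hkS, if_true]
        refine (h k ?_ t ht).symm
        simp only [Finset.mem_union, Finset.mem_inter] at hk ⊢
        tauto
      · simp [ω₁, hkS]
    rw [← condProb_eq_of_condEnt_eq hp hTU hT, ← condProb_congr h₂,
      condProb_eq_of_condEnt_eq hp hTU hT, ← condProb_eq_of_condEnt_eq hp hSU hS,
      condProb_congr h₁, condProb_eq_of_condEnt_eq hp hSU hS]
  simp only [condEnt, key]

lemma condEnt_eq_of_causalEnt_eq (hp : ∀ ω, 0 < p ω) (hST : S ⊆ T)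
    (h : causalEnt p i S = causalEnt p i T) (j : Fin n) : condEnt p i S j = condEnt p i T j :=
  ((Finset.sum_eq_sum_iff_of_le fun _ _ => condEnt_anti hp hST).1 h.symm j
    (Finset.mem_univ j)).symm

lemma causalEnt_inter_eq (hp : ∀ ω, 0 < p ω) {U : Finset (Fin m)} (hSU : S ⊆ U) (hTU : T ⊆ U)
    (hS : causalEnt p i S = causalEnt p i U) (hT : causalEnt p i T = causalEnt p i U) :
    causalEnt p i (S ∩ T) = causalEnt p i U :=
  Finset.sum_congr rfl fun j _ => condEnt_inter_eq hp hSU hTU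
    (condEnt_eq_of_causalEnt_eq hp hSU hS j) (condEnt_eq_of_causalEnt_eq hp hTU hT j)

lemma isCausalBlanket_iff [DecidableEq 𝒳] (hp : ∀ ω, 0 < p ω) :
    IsCausalBlanket p i S ↔
      S ⊆ Finset.univ.erase i ∧ causalEnt p i S = causalEnt p i (Finset.univ.erase i) := by
  refine and_congr_right fun hS => ?_
  rw [di_eq hp, Finset.sdiff_union_of_subset hS, sub_eq_zero]

end Processes

/-- causal Markov blankets and a causal data-processing inequality.
Under Assumption 1, if `A(i)` is the causal Markov boundary of `X_i`, `A(i) ⊆ B ⊆ [m]∖{i}`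
and `W ⊆ [m]∖{i}`, then (i) `I(X_W → X_i ‖ X_B) = 0` (the causal Markov chain
`X_W → X_B → X_i`), (ii) `I(X_W → X_i) ≤ I(X_B → X_i)`, and (iii) equality holds in (ii)
iff `A(i) ⊆ W`. -/
theorem stmt_9 {m n : ℕ} (hm : 2 ≤ m) (hn : 1 ≤ n)
    {𝒳 : Type} [Fintype 𝒳] [DecidableEq 𝒳] [Nonempty 𝒳]
    (p : Traj m n 𝒳 → ℝ) (hp : Assumption1 p)
    (i : Fin m) (A B W : Finset (Fin m))
    (hA : IsCausalBoundary p i A)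
    (hB : B ⊆ Finset.univ.erase i) (hAB : A ⊆ B)
    (hW : W ⊆ Finset.univ.erase i) :
    di p W i B = 0 ∧
      di p W i ∅ ≤ di p B i ∅ ∧
      (di p W i ∅ = di p B i ∅ ↔ A ⊆ W) := by
  have hpos := hp.1
  set U : Finset (Fin m) := Finset.univ.erase i
  obtain ⟨hAU, hAeq⟩ := (isCausalBlanket_iff hpos).1 hA.1
  have hsup : ∀ S, A ⊆ S → S ⊆ U → causalEnt p i S = causalEnt p i U := fun S hAS hSU =>
    ((causalEnt_anti hpos hAS).trans_eq hAeq).antisymm (causalEnt_anti hpos hSU)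
  have hBeq := hsup B hAB hB
  simp only [di_eq hpos, Finset.union_empty]
  refine ⟨?_, ?_, ?_⟩
  · rw [hBeq, hsup (W ∪ B) (hAB.trans Finset.subset_union_right) (Finset.union_subset hW hB),
      sub_self]
  · rw [hBeq]
    linarith [causalEnt_anti (i := i) hpos hW]
  · rw [sub_right_inj, hBeq]
    refine ⟨fun h => ?_, fun h => hsup W h hW⟩
    have hinter : IsCausalBlanket p i (A ∩ W) := (isCausalBlanket_iff hpos).2
      ⟨Finset.inter_subset_left.trans hAU, causalEnt_inter_eq hpos hAU hW hAeq h⟩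
    exact Finset.inter_eq_left.1
      (Finset.eq_of_subset_of_card_le Finset.inter_subset_left (hA.2 _ hinter))
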